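/- The group P₂ generated by diag(i,1), diag(j,1), and (1/2)·[[1+j, −1+j], [−1+j, 1+j]] has order 1920, and the group P₃ generated by diag(i,1), diag(j,1), and (1/√2)·[[1,1],[1,−1]] has order 3840. -/

import Mathlib

noncomputable section
open Quaternion Matrix

abbrev HQ := ℍ[ℝ]
def qi : HQ := ⟨0,1,0,0⟩
def qj : HQ := ⟨0,0,1,0⟩
def qk : HQ := ⟨0,0,0,1⟩

/-- Inner product on the right ℍ-module ℍ^d. -/
def inprod {d : ℕ} (v w : Fin d → HQ) : HQ := ∑ m, star (v m) * w m


namespace PGroups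

/-- Integer quaternions as tuples of coordinates. -/
abbrev Z4 := ℤ × ℤ × ℤ × ℤ

def qm (x y : Z4) : Z4 :=
  match x, y with
  | (a, b, c, d), (e, f, g, h) =>
    (a*e-b*f-c*g-d*h, a*f+b*e+c*h-d*g, a*g-b*h+c*e+d*f, a*h+b*g-c*f+d*e)

def qadd (x y : Z4) : Z4 :=
  match x, y with
  | (a, b, c, d), (e, f, g, h) => (a+e, b+f, c+g, d+h)

def qsub (x y : Z4) : Z4 :=
  match x, y with
  | (a, b, c, d), (e, f, g, h) => (a-e, b-f, c-g, d-h)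

def qhalf (x : Z4) : Z4 :=
  match x with
  | (a, b, c, d) => (a/2, b/2, c/2, d/2)

def qconj (x : Z4) : Z4 :=
  match x with
  | (a, b, c, d) => (a, -b, -c, -d)

def toH (x : Z4) : HQ := ⟨x.1, x.2.1, x.2.2.1, x.2.2.2⟩

theorem toH_re (x : Z4) : (toH x).re = x.1 := rfl
theorem toH_imI (x : Z4) : (toH x).imI = x.2.1 := rfl
theorem toH_imJ (x : Z4) : (toH x).imJ = x.2.2.1 := rfl
theorem toH_imK (x : Z4) : (toH x).imK = x.2.2.2 := rfl
theorem qj_re : qj.re = 0 := rfl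
theorem qj_imI : qj.imI = 0 := rfl
theorem qj_imJ : qj.imJ = 1 := rfl
theorem qj_imK : qj.imK = 0 := rfl

theorem toH_qm (x y : Z4) : toH (qm x y) = toH x * toH y := by
  obtain ⟨a, b, c, d⟩ := x
  obtain ⟨e, f, g, h⟩ := y
  ext <;> simp [toH_re, toH_imI, toH_imJ, toH_imK, qm]

theorem toH_qadd (x y : Z4) : toH (qadd x y) = toH x + toH y := by
  obtain ⟨a, b, c, d⟩ := x
  obtain ⟨e, f, g, h⟩ := y
  ext <;> simp [toH_re, toH_imI, toH_imJ, toH_imK, qadd]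

theorem toH_qsub (x y : Z4) : toH (qsub x y) = toH x - toH y := by
  obtain ⟨a, b, c, d⟩ := x
  obtain ⟨e, f, g, h⟩ := y
  ext <;> simp [toH_re, toH_imI, toH_imJ, toH_imK, qsub]

theorem qm_assoc (x y z : Z4) : qm (qm x y) z = qm x (qm y z) := by
  obtain ⟨a, b, c, d⟩ := x
  obtain ⟨e, f, g, h⟩ := y
  obtain ⟨i, j, k, l⟩ := z
  simp only [qm, Prod.mk.injEq]
  refine ⟨?_, ?_, ?_, ?_⟩ <;> ring

theorem qm_one (x : Z4) : qm x (1, 0, 0, 0) = x := by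
  obtain ⟨a, b, c, d⟩ := x
  simp [qm]

/-- The element `2⁻¹ M` (if `e = false`) or `(2√2)⁻¹ M` (if `e = true`), `M = [[a, b], [c, d]]`. -/
structure El where
  e : Bool
  a : Z4
  b : Z4
  c : Z4
  d : Z4

instance : DecidableEq El := fun x y =>
  decidable_of_iff (x.e = y.e ∧ x.a = y.a ∧ x.b = y.b ∧ x.c = y.c ∧ x.d = y.d)
    (by cases x; cases y; simp)

def sca (e : Bool) : ℝ := if e then Real.sqrt 2 / 4 else 1 / 2

def phi (x : El) : Matrix (Fin 2) (Fin 2) HQ :=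
  sca x.e • !![toH x.a, toH x.b; toH x.c, toH x.d]

def gen (s : ℕ) : Matrix (Fin 2) (Fin 2) HQ :=
  match s with
  | 0 => !![qi, 0; 0, 1]
  | 1 => !![qj, 0; 0, 1]
  | 2 => (2:ℝ)⁻¹ • !![1 + qj, -1 + qj; -1 + qj, 1 + qj]
  | _ => (Real.sqrt 2)⁻¹ • !![1, 1; 1, -1]

def zI : Z4 := (0, 1, 0, 0)
def zJ : Z4 := (0, 0, 1, 0)
def zP : Z4 := (1, 0, 1, 0)
def zN : Z4 := (-1, 0, 1, 0)

def raw (s : ℕ) (x : El) : El :=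
  match s with
  | 0 => ⟨x.e, qm zI x.a, qm zI x.b, x.c, x.d⟩
  | 1 => ⟨x.e, qm zJ x.a, qm zJ x.b, x.c, x.d⟩
  | 2 => ⟨x.e, qadd (qm zP x.a) (qm zN x.c), qadd (qm zP x.b) (qm zN x.d),
      qadd (qm zN x.a) (qm zP x.c), qadd (qm zN x.b) (qm zP x.d)⟩
  | _ => ⟨!x.e, qadd x.a x.c, qadd x.b x.d, qsub x.a x.c, qsub x.b x.d⟩

def hlv (s : ℕ) (x : El) : Bool :=
  match s with
  | 0 => false
  | 1 => false
  | 2 => true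
  | _ => x.e

def half (x : El) : El := ⟨x.e, qhalf x.a, qhalf x.b, qhalf x.c, qhalf x.d⟩

def dbl (x : El) : El := ⟨x.e, qadd x.a x.a, qadd x.b x.b, qadd x.c x.c, qadd x.d x.d⟩

def step (s : ℕ) (x : El) : El := if hlv s x then half (raw s x) else raw s x

def ok (s : ℕ) (x : El) : Bool := !hlv s x || decide (dbl (step s x) = raw s x)

theorem phi_dbl (x : El) : phi (dbl x) = (2:ℝ) • phi x := by
  simp only [phi, dbl, toH_qadd]
  rw [smul_comm]
  congr 1
  ext1 i j
  fin_cases i <;> fin_cases j <;> simp [two_smul]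

theorem toH_zI : toH zI = qi := by ext <;> simp [toH, zI, qi]
theorem toH_zJ : toH zJ = qj := by ext <;> simp [toH, zJ, qj]
theorem toH_zP : toH zP = 1 + qj := by ext <;> simp [toH_re, toH_imI, toH_imJ, toH_imK, zP, qj_re, qj_imI, qj_imJ, qj_imK]
theorem toH_zN : toH zN = -1 + qj := by ext <;> simp [toH_re, toH_imI, toH_imJ, toH_imK, zN, qj_re, qj_imI, qj_imJ, qj_imK]

theorem gen_mul (s : ℕ) (x : El) :
    gen s * phi x = (if hlv s x then (2:ℝ)⁻¹ else 1) • phi (raw s x) := by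
  obtain ⟨e, a, b, c, d⟩ := x
  match s with
  | 0 => simp [gen, phi, raw, hlv, toH_qm, toH_zI]
  | 1 => simp [gen, phi, raw, hlv, toH_qm, toH_zJ]
  | 2 =>
    simp only [gen, phi, raw, hlv, toH_qm, toH_qadd, toH_zP, toH_zN, if_true]
    rw [smul_mul_assoc, mul_smul_comm]
    congr 2
    simp
  | (n+3) =>
    have h2 : Real.sqrt 2 * Real.sqrt 2 = 2 := Real.mul_self_sqrt (by norm_num)
    have h0 : Real.sqrt 2 ≠ 0 := by positivity
    have key : sca e * (Real.sqrt 2)⁻¹ = (if e then (2:ℝ)⁻¹ else 1) * sca (!e) := by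
      cases e <;> simp [sca] <;> field_simp <;> nlinarith
    simp only [gen, phi, raw, hlv, toH_qadd, toH_qsub]
    rw [smul_smul, ← key, smul_mul_assoc, mul_smul_comm, smul_smul, mul_comm]
    congr 1
    simp [sub_eq_add_neg]

theorem step_ok (s : ℕ) (x : El) (h : ok s x = true) : gen s * phi x = phi (step s x) := by
  rw [gen_mul]
  by_cases hh : hlv s x = true
  · have h3 : dbl (step s x) = raw s x := by simpa [ok, hh] using h
    rw [← h3, phi_dbl, if_pos hh, smul_smul]
    norm_num
  · rw [if_neg hh, one_smul, step, if_neg hh]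

def one : El := ⟨false, (2, 0, 0, 0), (0, 0, 0, 0), (0, 0, 0, 0), (2, 0, 0, 0)⟩

theorem phi_diag (p q : Z4) :
    phi ⟨false, qadd p p, (0, 0, 0, 0), (0, 0, 0, 0), qadd q q⟩ = !![toH p, 0; 0, toH q] := by
  have h0 : toH (0, 0, 0, 0) = 0 := by ext <;> simp [toH]
  have h2 (u : HQ) : (2:ℝ)⁻¹ • (u + u) = u := by
    rw [← two_smul ℝ u, smul_smul]; norm_num
  ext1 i j
  fin_cases i <;> fin_cases j <;> simp [phi, toH_qadd, h0, sca, - smul_add, h2]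

theorem toH_one : toH (1, 0, 0, 0) = 1 := by ext <;> simp [toH]

theorem phi_one : phi one = 1 := by
  have := phi_diag (1, 0, 0, 0) (1, 0, 0, 0)
  rw [toH_one] at this
  rw [Matrix.one_fin_two, ← this]
  rfl

def evalW : List ℕ → El
  | [] => one
  | s :: w => step s (evalW w)

def okW (gs : List ℕ) : List ℕ → Bool
  | [] => true
  | s :: w => okW gs w && (gs.elem s && ok s (evalW w))

def act (x : El) (p q : Z4) : El := ⟨x.e, qm x.a p, qm x.b q, qm x.c p, qm x.d q⟩

theorem phi_act (x : El) (p q : Z4) : phi (act x p q) = phi x * !![toH p, 0; 0, toH q] := by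
  simp [phi, act, toH_qm]

def U : List Z4 :=
  [(1, 0, 0, 0), (-1, 0, 0, 0), (0, 1, 0, 0), (0, -1, 0, 0), (0, 0, 1, 0), (0, 0, -1, 0),
   (0, 0, 0, 1), (0, 0, 0, -1)]

theorem U_mul : ∀ p ∈ U, ∀ q ∈ U, qm p q ∈ U := by decide +kernel
theorem U_conj : ∀ p ∈ U, qconj p ∈ U := by decide +kernel
theorem U_inv : ∀ p ∈ U, qm p (qconj p) = (1, 0, 0, 0) := by decide +kernel
theorem U_inv2 : ∀ p ∈ U, ∀ q ∈ U, qm p (qconj q) = (1, 0, 0, 0) → p = q := by decide +kernel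
theorem U_nodup : U.Nodup := by decide +kernel

/-- Column comparison modulo right units. -/
def colne (a c a' c' : Z4) : Bool :=
  U.all fun p => !(decide (qm a p = a') && decide (qm c p = c'))

def differ (x y : El) : Bool :=
  x.e != y.e || (colne x.a x.c y.a y.c || colne x.b x.d y.b y.d)

/-- The columns have trivial stabilizer in the unit group. -/
def selfcol (a c : Z4) : Bool :=
  U.all fun p => decide (p = (1, 0, 0, 0)) || !(decide (qm a p = a) && decide (qm c p = c))

def pairs (r : El → El → Bool) : List El → Bool
  | [] => true
  | x :: l => l.all (r x) && pairs r l

theorem pairs_pairwise (r : El → El → Bool) (l : List El) (h : pairs r l = true) :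
    l.Pairwise (fun x y => r x y = true) := by
  induction l with
  | nil => exact List.Pairwise.nil
  | cons x l ih =>
    simp only [pairs, Bool.and_eq_true, List.all_eq_true] at h
    exact List.Pairwise.cons h.1 (ih h.2)

theorem phi_inj (x y : El) (h : phi x = phi y) :
    (y.a = (0, 0, 0, 0) ∧ y.c = (0, 0, 0, 0)) ∨ x = y := by
  obtain ⟨e, a, b, c, d⟩ := x
  obtain ⟨e', a', b', c', d'⟩ := y
  have ha := congrFun (congrFun h 0) 0
  have hb := congrFun (congrFun h 0) 1
  have hc := congrFun (congrFun h 1) 0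
  have hd := congrFun (congrFun h 1) 1
  simp only [phi, Matrix.smul_apply, Matrix.of_apply, Matrix.cons_val_zero, Matrix.cons_val_one,
    Matrix.cons_val', Matrix.cons_val_fin_one] at ha hb hc hd
  have hs : ∀ e, sca e ≠ 0 := by
    intro e; cases e <;> simp [sca]
  have same : ∀ e (u v : Z4), sca e • toH u = sca e • toH v → u = v := by
    intro e u v huv
    have := smul_right_injective HQ (hs e) huv
    obtain ⟨u1, u2, u3, u4⟩ := u
    obtain ⟨v1, v2, v3, v4⟩ := v
    have h1 := congrArg QuaternionAlgebra.re this
    have h2 := congrArg QuaternionAlgebra.imI this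
    have h3 := congrArg QuaternionAlgebra.imJ this
    have h4 := congrArg QuaternionAlgebra.imK this
    simp only [toH, Int.cast_inj] at h1 h2 h3 h4
    rw [h1, h2, h3, h4]
  have irr : Irrational (Real.sqrt 2) := irrational_sqrt_two
  have h2 : Real.sqrt 2 * Real.sqrt 2 = 2 := Real.mul_self_sqrt (by norm_num)
  have key : ∀ m n : ℤ, (m:ℝ) = Real.sqrt 2 * n → n = 0 := by
    intro m n hmn
    by_contra hn
    exact (irr.mul_intCast hn).ne_int m hmn.symm
  have crd : ∀ e e' (m n : ℤ), e ≠ e' → sca e * m = sca e' * n → n = 0 := by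
    intro e e' m n hne hmn
    cases e <;> cases e' <;> simp [sca] at hne hmn
    · apply key (2 * m) n
      push_cast; linarith
    · have : Real.sqrt 2 * (Real.sqrt 2 * m) = 2 * m := by rw [← mul_assoc, h2]
      apply key m n
      have h5 : (n:ℝ) = Real.sqrt 2 * m / 2 := by linarith
      rw [h5]; linarith
  by_cases hee : e = e'
  · subst hee
    right
    rw [same _ _ _ ha, same _ _ _ hb, same _ _ _ hc, same _ _ _ hd]
  · left
    have diff : ∀ (u v : Z4), sca e • toH u = sca e' • toH v → v = (0, 0, 0, 0) := by
      intro u v huv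
      obtain ⟨u1, u2, u3, u4⟩ := u
      obtain ⟨v1, v2, v3, v4⟩ := v
      have h1 := congrArg QuaternionAlgebra.re huv
      have h2 := congrArg QuaternionAlgebra.imI huv
      have h3 := congrArg QuaternionAlgebra.imJ huv
      have h4 := congrArg QuaternionAlgebra.imK huv
      simp [toH] at h1 h2 h3 h4
      rw [crd _ _ _ _ hee h1, crd _ _ _ _ hee h2, crd _ _ _ _ hee h3, crd _ _ _ _ hee h4]
    exact ⟨diff _ _ ha, diff _ _ hc⟩

theorem cancel (a a' p p' : Z4) (hp' : p' ∈ U) (h : qm a p = qm a' p') :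
    qm a (qm p (qconj p')) = a' := by
  rw [← qm_assoc, h, qm_assoc, U_inv p' hp', qm_one]

theorem colne_false {a c a' c' p p' : Z4} (hp : p ∈ U) (hp' : p' ∈ U)
    (h1 : qm a p = qm a' p') (h2 : qm c p = qm c' p') (h : colne a c a' c' = true) : False := by
  have := List.all_eq_true.mp h _ (U_mul p hp _ (U_conj p' hp'))
  rw [cancel a a' p p' hp' h1, cancel c c' p p' hp' h2] at this
  simp at this

theorem selfcol_eq {a c p p' : Z4} (hp : p ∈ U) (hp' : p' ∈ U)
    (h1 : qm a p = qm a p') (h2 : qm c p = qm c p') (h : selfcol a c = true) : p = p' := by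
  have := List.all_eq_true.mp h _ (U_mul p hp _ (U_conj p' hp'))
  rw [cancel a a p p' hp' h1, cancel c c p p' hp' h2] at this
  simp at this
  exact U_inv2 p hp p' hp' this

/-- One row of the coset table is correct. -/
def chkRow (Ts : List El) (s : ℕ) (row : List ℕ) : Bool :=
  decide (row.length = Ts.length) &&
  (Ts.zip row).all fun xn =>
    ok s xn.1 &&
    (match Ts[xn.2]? with
    | none => false
    | some t => U.any fun p => decide (qm t.a p = (step s xn.1).a) &&
        (decide (qm t.c p = (step s xn.1).c) && (t.e == (step s xn.1).e &&
        U.any fun q => decide (qm t.b q = (step s xn.1).b) &&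
          decide (qm t.d q = (step s xn.1).d))))

theorem chkRow_spec (Ts : List El) (s : ℕ) (row : List ℕ) (h : chkRow Ts s row = true)
    (x : El) (hx : x ∈ Ts) :
    ok s x = true ∧ ∃ t ∈ Ts, ∃ p ∈ U, ∃ q ∈ U, step s x = act t p q := by
  simp only [chkRow, Bool.and_eq_true, decide_eq_true_eq, List.all_eq_true] at h
  obtain ⟨hl, h⟩ := h
  obtain ⟨i, hi, rfl⟩ := List.mem_iff_getElem.mp hx
  have hi' : i < (Ts.zip row).length := by simp [hl, hi]
  have := h _ (List.getElem_mem hi')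
  rw [List.getElem_zip] at this
  obtain ⟨h1, h2⟩ := this
  refine ⟨h1, ?_⟩
  dsimp only at h2
  split at h2
  · simp at h2
  · rename_i t ht
    simp only [List.any_eq_true, Bool.and_eq_true, decide_eq_true_eq, beq_iff_eq] at h2
    obtain ⟨p, hp, ha, hc, he, q, hq, hb, hd⟩ := h2
    refine ⟨t, List.mem_of_getElem? ht, p, hp, q, hq, ?_⟩
    simp [act, ha, hb, hc, hd, he]

theorem evalW_mem (gs : List ℕ) (w : List ℕ) (h : okW gs w = true) :
    phi (evalW w) ∈ Submonoid.closure (Set.image gen {s | s ∈ gs}) := by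
  induction w with
  | nil => rw [evalW, phi_one]; exact one_mem _
  | cons s w ih =>
    simp only [okW, Bool.and_eq_true] at h
    obtain ⟨h1, h2, h3⟩ := h
    rw [evalW, ← step_ok _ _ h3]
    exact mul_mem (Submonoid.subset_closure ⟨s, by simpa using h2, rfl⟩) (ih h1)

theorem card_closure (gs : List ℕ) (words up uq : List (List ℕ)) (n : ℕ)
    (hlen : words.length = n)
    (hone : one ∈ words.map evalW)
    (hw : ∀ w ∈ words, okW gs w = true)
    (hup : ∀ w ∈ up, okW gs w = true)
    (huq : ∀ w ∈ uq, okW gs w = true)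
    (hup' : up.map evalW = U.map fun p =>
      ⟨false, qadd p p, (0, 0, 0, 0), (0, 0, 0, 0), qadd (1, 0, 0, 0) (1, 0, 0, 0)⟩)
    (huq' : uq.map evalW = U.map fun p =>
      ⟨false, qadd (1, 0, 0, 0) (1, 0, 0, 0), (0, 0, 0, 0), (0, 0, 0, 0), qadd p p⟩)
    (hstep : ∀ s ∈ gs, ∃ row, chkRow (words.map evalW) s row = true)
    (hself : ∀ x ∈ words.map evalW, (selfcol x.a x.c && selfcol x.b x.d) = true)
    (hdiff : pairs differ (words.map evalW) = true) :
    Nat.card (Submonoid.closure (Set.image gen {s | s ∈ gs})) = n * 64 := by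
  classical
  set Ts := words.map evalW with hTs
  have hpw := pairs_pairwise _ _ hdiff
  have hU1 : ((1, 0, 0, 0) : Z4) ∈ U := by decide
  have hcn : ∀ a c, colne a c a c = true → False := fun a c h =>
    colne_false hU1 hU1 rfl rfl h
  have hirr : ∀ x, differ x x = true → False := by
    intro x hx
    simp only [differ, bne_self_eq_false, Bool.false_or, Bool.or_eq_true] at hx
    exact hx.elim (hcn _ _) (hcn _ _)
  have hnd : Ts.Nodup := hpw.imp fun {a b} h hab => by
    subst hab; exact hirr _ h
  have hact : ∀ x y p q p' q', p ∈ U → q ∈ U → p' ∈ U → q' ∈ U →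
      act x p q = act y p' q' → differ x y = true → False := by
    intro x y p q p' q' hp hq hp' hq' h hd
    simp only [act, El.mk.injEq] at h
    obtain ⟨h1, h2, h3, h4, h5⟩ := h
    simp only [differ, h1, bne_self_eq_false, Bool.false_or, Bool.or_eq_true] at hd
    exact hd.elim (colne_false hp hp' h2 h4) (colne_false hq hq' h3 h5)
  have hactT : ∀ x ∈ Ts, ∀ y ∈ Ts, ∀ p q p' q', p ∈ U → q ∈ U → p' ∈ U → q' ∈ U →
      act x p q = act y p' q' → x = y := by
    intro x hx y hy p q p' q' hp hq hp' hq' h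
    by_contra hne
    have : differ x y = true ∨ differ y x = true := by
      have : Std.Symm (fun x y => differ x y = true ∨ differ y x = true) :=
        ⟨fun _ _ h => h.symm⟩
      exact List.Pairwise.forall (R := fun x y => differ x y = true ∨ differ y x = true)
        (hpw.imp fun h => Or.inl h) hx hy hne
    rcases this with h' | h'
    · exact hact _ _ _ _ _ _ hp hq hp' hq' h h'
    · exact hact _ _ _ _ _ _ hp' hq' hp hq h.symm h'
  let f : El × Z4 × Z4 → Matrix (Fin 2) (Fin 2) HQ := fun z => phi (act z.1 z.2.1 z.2.2)
  let D : Finset (El × Z4 × Z4) := Ts.toFinset ×ˢ U.toFinset ×ˢ U.toFinset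
  have hinj : Set.InjOn f D := by
    rintro ⟨x, p, q⟩ hx ⟨y, p', q'⟩ hy hxy
    simp only [D, Finset.mem_coe, Finset.mem_product, List.mem_toFinset] at hx hy
    obtain ⟨hx, hp, hq⟩ := hx
    obtain ⟨hy, hp', hq'⟩ := hy
    rcases phi_inj _ _ hxy with ⟨h1, h2⟩ | h
    · exfalso
      have hs := hself y hy
      rw [Bool.and_eq_true] at hs
      have hz : ∀ u : Z4, qm (0, 0, 0, 0) u = (0, 0, 0, 0) := by
        rintro ⟨_, _, _, _⟩; simp [qm]
      have hca : ∀ u : Z4, qm u p' = (0, 0, 0, 0) → u = (0, 0, 0, 0) := by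
        intro u hu
        have := cancel u (0, 0, 0, 0) p' p' hp' (by rw [hu, hz])
        rwa [U_inv p' hp', qm_one] at this
      have e1 : y.a = (0, 0, 0, 0) := hca _ h1
      have e2 : y.c = (0, 0, 0, 0) := hca _ h2
      rw [e1, e2] at hs
      exact absurd hs.1 (by decide)
    · have := hactT x hx y hy p q p' q' hp hq hp' hq' h
      subst this
      have hs := hself x hx
      rw [Bool.and_eq_true] at hs
      simp only [act, El.mk.injEq] at h
      obtain ⟨-, h2, h3, h4, h5⟩ := h
      rw [selfcol_eq hp hp' h2 h4 hs.1, selfcol_eq hq hq' h3 h5 hs.2]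
  have hDmem : ∀ p ∈ U, ∀ q ∈ U, (!![toH p, 0; 0, toH q] : Matrix (Fin 2) (Fin 2) HQ) ∈
      Submonoid.closure (Set.image gen {s | s ∈ gs}) := by
    intro p hp q hq
    have e1 : (!![toH p, 0; 0, 1] : Matrix (Fin 2) (Fin 2) HQ) ∈
        Submonoid.closure (Set.image gen {s | s ∈ gs}) := by
      have := List.mem_map_of_mem (f := fun p => (⟨false, qadd p p, (0, 0, 0, 0), (0, 0, 0, 0),
        qadd (1, 0, 0, 0) (1, 0, 0, 0)⟩ : El)) hp
      rw [← hup'] at this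
      obtain ⟨w, hw1, hw2⟩ := List.mem_map.mp this
      have h3 := evalW_mem gs w (hup w hw1)
      rwa [hw2, phi_diag, toH_one] at h3
    have e2 : (!![1, 0; 0, toH q] : Matrix (Fin 2) (Fin 2) HQ) ∈
        Submonoid.closure (Set.image gen {s | s ∈ gs}) := by
      have := List.mem_map_of_mem (f := fun p => (⟨false, qadd (1, 0, 0, 0) (1, 0, 0, 0),
        (0, 0, 0, 0), (0, 0, 0, 0), qadd p p⟩ : El)) hq
      rw [← huq'] at this
      obtain ⟨w, hw1, hw2⟩ := List.mem_map.mp this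
      have h3 := evalW_mem gs w (huq w hw1)
      rwa [hw2, phi_diag, toH_one] at h3
    have := mul_mem e1 e2
    simpa using this
  have hset : ((Submonoid.closure (Set.image gen {s | s ∈ gs}) : Submonoid _) :
      Set (Matrix (Fin 2) (Fin 2) HQ)) = ((D.image f : Finset _) : Set _) := by
    apply Set.Subset.antisymm
    · intro m hm
      induction hm using Submonoid.closure_induction_left with
      | one =>
        simp only [Finset.coe_image, Set.mem_image, Finset.mem_coe]
        refine ⟨(one, (1, 0, 0, 0), (1, 0, 0, 0)), ?_, ?_⟩
        · simp only [D, Finset.mem_product, List.mem_toFinset]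
          exact ⟨hone, hU1, hU1⟩
        · simp only [f, phi_act, phi_one, toH_one, ← Matrix.one_fin_two, one_mul]
      | mul_left g hg m hm ih =>
        simp only [Finset.coe_image, Set.mem_image, Finset.mem_coe] at ih ⊢
        obtain ⟨⟨x, p, q⟩, hx, rfl⟩ := ih
        simp only [D, Finset.mem_product, List.mem_toFinset] at hx
        obtain ⟨hx, hp, hq⟩ := hx
        obtain ⟨s, hs, rfl⟩ := hg
        obtain ⟨row, hrow⟩ := hstep s hs
        obtain ⟨hok, t, ht, p', hp', q', hq', hst⟩ := chkRow_spec _ _ _ hrow x hx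
        refine ⟨(t, qm p' p, qm q' q), ?_, ?_⟩
        · simp only [D, Finset.mem_product, List.mem_toFinset]
          exact ⟨ht, U_mul _ hp' _ hp, U_mul _ hq' _ hq⟩
        · simp only [f]
          rw [phi_act x, ← mul_assoc, step_ok _ _ hok, hst, ← phi_act]
          simp only [act, qm_assoc]
    · intro m hm
      simp only [Finset.coe_image, Set.mem_image, Finset.mem_coe] at hm
      obtain ⟨⟨x, p, q⟩, hx, rfl⟩ := hm
      simp only [D, Finset.mem_product, List.mem_toFinset] at hx
      obtain ⟨hx, hp, hq⟩ := hx
      obtain ⟨w, hw1, rfl⟩ := List.mem_map.mp hx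
      simp only [f, phi_act]
      exact mul_mem (evalW_mem gs w (hw w hw1)) (hDmem p hp q hq)
  have hcard : Nat.card (Submonoid.closure (Set.image gen {s | s ∈ gs})) =
      Set.ncard ((Submonoid.closure (Set.image gen {s | s ∈ gs}) : Submonoid _) :
      Set (Matrix (Fin 2) (Fin 2) HQ)) := rfl
  rw [hcard, hset, Set.ncard_coe_finset, Finset.card_image_of_injOn hinj]
  simp only [D, Finset.card_product, List.toFinset_card_of_nodup hnd,
    List.toFinset_card_of_nodup U_nodup]
  simp [hTs, hlen, U]

def words2 : List (List ℕ) :=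
  [[], [2], [0, 2], [1, 2], [2, 2], [0, 0, 2], [1, 0, 2], [2, 0, 2], [0, 1, 2], [0, 0, 0, 2],
   [1, 0, 0, 2], [2, 1, 0, 2], [0, 2, 0, 2], [1, 2, 0, 2], [2, 0, 1, 2], [2, 0, 0, 0, 2], [0,
   2, 1, 0, 2], [1, 2, 1, 0, 2], [1, 0, 2, 0, 2], [0, 1, 2, 0, 2], [0, 2, 0, 1, 2], [1, 2, 0,
   1, 2], [0, 2, 0, 0, 0, 2], [1, 2, 0, 0, 0, 2], [1, 0, 2, 1, 0, 2], [2, 0, 2, 1, 0, 2], [0,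
   1, 2, 1, 0, 2], [2, 1, 0, 2, 0, 2], [2, 0, 1, 2, 0, 2], [2, 0, 2, 0, 1, 2]]

def tbl2 : List (List ℕ) :=
  [[0, 2, 5, 8, 4, 9, 3, 12, 10, 1, 6, 16, 15, 19, 20, 22, 14, 26, 13, 23, 11, 24, 7, 18, 17,
   25, 21, 27, 28, 29], [0, 3, 6, 5, 4, 10, 9, 13, 2, 8, 1, 17, 18, 15, 21, 23, 24, 14, 22, 12,
   26, 11, 19, 7, 20, 25, 16, 27, 28, 29], [1, 4, 7, 3, 5, 0, 11, 9, 14, 15, 10, 8, 12, 17, 6,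
   2, 25, 23, 27, 28, 29, 13, 22, 21, 24, 20, 26, 19, 18, 16]]

def up2 : List (List ℕ) :=
  [[], [0, 0], [0], [0, 0, 0], [1], [1, 0, 0], [0, 1], [1, 0]]

def uq2 : List (List ℕ) :=
  [[], [2, 2, 0, 0, 2, 2], [2, 2, 0, 2, 2], [2, 2, 0, 0, 0, 2, 2], [2, 0, 0, 2, 1], [2, 2, 1,
   0, 0, 2, 2], [2, 2, 0, 1, 2, 2], [2, 2, 1, 0, 2, 2]]

def words3 : List (List ℕ) :=
  [[], [3], [0, 3], [1, 3], [0, 0, 3], [1, 0, 3], [3, 0, 3], [0, 1, 3], [3, 1, 3], [0, 0, 0,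
   3], [1, 0, 0, 3], [3, 0, 0, 3], [3, 1, 0, 3], [0, 3, 0, 3], [1, 3, 0, 3], [3, 0, 1, 3], [0,
   3, 1, 3], [1, 3, 1, 3], [3, 0, 0, 0, 3], [3, 1, 0, 0, 3], [0, 3, 1, 0, 3], [1, 3, 1, 0, 3],
   [1, 0, 3, 0, 3], [3, 0, 3, 0, 3], [0, 1, 3, 0, 3], [3, 1, 3, 0, 3], [0, 3, 0, 1, 3], [1, 3,
   0, 1, 3], [1, 0, 3, 1, 3], [3, 0, 3, 1, 3], [0, 1, 3, 1, 3], [3, 1, 3, 1, 3], [0, 3, 0, 0,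
   0, 3], [1, 3, 0, 0, 0, 3], [0, 3, 1, 0, 0, 3], [1, 3, 1, 0, 0, 3], [1, 0, 3, 1, 0, 3], [3,
   0, 3, 1, 0, 3], [0, 1, 3, 1, 0, 3], [3, 1, 3, 1, 0, 3], [3, 1, 0, 3, 0, 3], [3, 0, 1, 3, 0,
   3], [1, 3, 1, 3, 0, 3], [3, 0, 3, 0, 1, 3], [3, 1, 3, 0, 1, 3], [3, 1, 0, 3, 1, 3], [3, 0,
   3, 0, 0, 0, 3], [3, 1, 3, 0, 0, 0, 3], [3, 0, 3, 1, 0, 0, 3], [3, 1, 3, 1, 0, 0, 3], [3, 1,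
   0, 3, 1, 0, 3], [1, 3, 0, 3, 1, 0, 3], [3, 0, 1, 3, 1, 0, 3], [0, 3, 1, 3, 1, 0, 3], [1, 3,
   0, 1, 3, 0, 3], [0, 1, 3, 1, 3, 0, 3], [3, 1, 3, 0, 3, 1, 0, 3], [3, 0, 3, 1, 3, 1, 0, 3],
   [3, 1, 3, 0, 1, 3, 0, 3], [3, 0, 1, 3, 1, 3, 0, 3]]

def tbl3 : List (List ℕ) :=
  [[0, 2, 4, 7, 9, 3, 13, 10, 16, 1, 5, 11, 20, 18, 24, 26, 19, 30, 32, 34, 15, 38, 14, 23, 33,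
   37, 12, 36, 17, 40, 35, 31, 6, 22, 8, 28, 21, 47, 27, 53, 48, 29, 55, 25, 54, 51, 46, 43,
   41, 49, 50, 42, 52, 44, 39, 45, 56, 57, 58, 59], [0, 3, 5, 4, 10, 9, 14, 2, 17, 7, 1, 11,
   21, 22, 18, 27, 28, 19, 33, 35, 36, 15, 32, 23, 13, 42, 38, 12, 34, 44, 16, 31, 24, 6, 30,
   8, 26, 51, 20, 29, 53, 54, 47, 55, 48, 25, 46, 45, 39, 49, 50, 43, 52, 41, 40, 37, 56, 57,
   58, 59], [1, 0, 6, 8, 11, 12, 2, 15, 3, 18, 19, 4, 5, 23, 25, 7, 29, 31, 9, 10, 37, 39, 40,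
   13, 41, 14, 43, 44, 45, 16, 42, 17, 46, 47, 48, 49, 50, 20, 52, 21, 22, 24, 30, 26, 27, 28,
   32, 33, 34, 35, 36, 56, 38, 57, 58, 59, 51, 53, 54, 55]]

def up3 : List (List ℕ) :=
  [[], [0, 0], [0], [0, 0, 0], [1], [1, 0, 0], [0, 1], [1, 0]]

def uq3 : List (List ℕ) :=
  [[], [3, 0, 0, 3, 0, 0, 3, 0, 0, 3], [3, 0, 3, 0, 0, 3, 0, 3, 0], [3, 0, 0, 3, 0, 0, 0, 3, 0,
   0, 3], [3, 1, 3, 0, 0, 3, 1, 3, 1], [3, 0, 0, 3, 1, 0, 0, 3, 0, 0, 3], [3, 0, 0, 3, 0, 1, 3,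
   0, 0, 3], [3, 0, 0, 3, 1, 0, 3, 0, 0, 3]]

theorem hself2 : ∀ x ∈ words2.map evalW, (selfcol x.a x.c && selfcol x.b x.d) = true := by
  decide +kernel
theorem hdiff2 : pairs differ (words2.map evalW) = true := by decide +kernel
theorem hr20 : chkRow (words2.map evalW) 0 (tbl2[0]!) = true := by decide +kernel
theorem hr21 : chkRow (words2.map evalW) 1 (tbl2[1]!) = true := by decide +kernel
theorem hr22 : chkRow (words2.map evalW) 2 (tbl2[2]!) = true := by decide +kernel
theorem hself3 : ∀ x ∈ words3.map evalW, (selfcol x.a x.c && selfcol x.b x.d) = true := by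
  decide +kernel
theorem hdiff3 : pairs differ (words3.map evalW) = true := by decide +kernel
theorem hr30 : chkRow (words3.map evalW) 0 (tbl3[0]!) = true := by decide +kernel
theorem hr31 : chkRow (words3.map evalW) 1 (tbl3[1]!) = true := by decide +kernel
theorem hr33 : chkRow (words3.map evalW) 3 (tbl3[2]!) = true := by decide +kernel

theorem card2 : Nat.card (Submonoid.closure (Set.image gen {s | s ∈ [0, 1, 2]})) = 30 * 64 := by
  refine card_closure [0, 1, 2] words2 up2 uq2 30 (by decide +kernel) (by decide +kernel)
    (by decide +kernel) (by decide +kernel) (by decide +kernel) (by decide +kernel)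
    (by decide +kernel) ?_ hself2 hdiff2
  intro s hs
  simp only [List.mem_cons, List.not_mem_nil, or_false] at hs
  rcases hs with rfl | rfl | rfl
  · exact ⟨_, hr20⟩
  · exact ⟨_, hr21⟩
  · exact ⟨_, hr22⟩

theorem card3 : Nat.card (Submonoid.closure (Set.image gen {s | s ∈ [0, 1, 3]})) = 60 * 64 := by
  refine card_closure [0, 1, 3] words3 up3 uq3 60 (by decide +kernel) (by decide +kernel)
    (by decide +kernel) (by decide +kernel) (by decide +kernel) (by decide +kernel)
    (by decide +kernel) ?_ hself3 hdiff3
  intro s hs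
  simp only [List.mem_cons, List.not_mem_nil, or_false] at hs
  rcases hs with rfl | rfl | rfl
  · exact ⟨_, hr30⟩
  · exact ⟨_, hr31⟩
  · exact ⟨_, hr33⟩

theorem gens_image (k : ℕ) : Set.image gen {s | s ∈ [0, 1, k]} = {gen 0, gen 1, gen k} := by
  have : {s | s ∈ [0, 1, k]} = ({0, 1, k} : Set ℕ) := by
    ext s; simp
  rw [this, Set.image_insert_eq, Set.image_insert_eq, Set.image_singleton]

theorem coe_smul_mat (r : ℝ) (M : Matrix (Fin 2) (Fin 2) HQ) : (r : HQ) • M = r • M := by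
  ext1 i j
  simp only [Matrix.smul_apply, smul_eq_mul, Quaternion.coe_mul_eq_smul]

end PGroups

/-- P₂ = ⟨diag(i,1), diag(j,1), (1/2)[[1+j,−1+j],[−1+j,1+j]]⟩ has order 1920,
and P₃ = ⟨diag(i,1), diag(j,1), (1/√2)[[1,1],[1,−1]]⟩ has order 3840. -/
theorem P2_order_1920_and_P3_order_3840 :
    Nat.card (Submonoid.closure
      {(!![qi, 0; 0, 1] : Matrix (Fin 2) (Fin 2) HQ), !![qj, 0; 0, 1],
       (((2:ℝ)⁻¹ : HQ)) • !![1 + qj, -1 + qj; -1 + qj, 1 + qj]}) = 1920 ∧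
    Nat.card (Submonoid.closure
      {(!![qi, 0; 0, 1] : Matrix (Fin 2) (Fin 2) HQ), !![qj, 0; 0, 1],
       (((Real.sqrt 2)⁻¹ : ℝ) : HQ) • !![1, 1; 1, -1]}) = 3840 := by
  
  have h2 := PGroups.card2
  have h3 := PGroups.card3
  rw [PGroups.gens_image] at h2 h3
  simp only [PGroups.gen] at h2 h3
  refine ⟨?_, ?_⟩
  · have e : ((2:ℝ) : HQ)⁻¹ = (((2:ℝ)⁻¹ : ℝ) : HQ) := by simp
    rw [e, PGroups.coe_smul_mat]; exact h2
  · rw [PGroups.coe_smul_mat]; exact h3
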